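/- For every positive integer m, the Minkowski dimension of the union ⋃_{p=1}^m C_p equals 1/2; equivalently, lim_{δ→0⁺} log λ(V_δ(⋃_{p=1}^m C_p)) / log δ = 1/2. -/

import Mathlib

open MeasureTheory Filter Set

/-- The closed `δ`-neighbourhood `V_δ(Ω) = {x : ∃ y ∈ Ω, |x - y| ≤ δ}`. -/
def closedNbhd (Ω : Set ℝ) (δ : ℝ) : Set ℝ := {x : ℝ | ∃ y ∈ Ω, |x - y| ≤ δ}

/-- The value `g(a₁ ⋯ a_k) = 1/(a₁ + 1/(a₂ + ⋯ + 1/a_k))` of a finite continued fraction. -/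
noncomputable def cfVal : List ℕ → ℝ
  | [] => 0
  | a :: t => 1 / ((a : ℝ) + cfVal t)

/-- A word of positive integers whose last letter (if any) is at least `2`. -/
def isCFWord (a : List ℕ) : Prop := (∀ x ∈ a, 1 ≤ x) ∧ ∀ ℓ ∈ a.getLast?, 2 ≤ ℓ

/-- `C_p`: the set of rationals in `(0,1)` whose continued fraction expansion
has length `p`. -/
def Cset (p : ℕ) : Set ℝ :=
  {x : ℝ | ∃ a : List ℕ, a.length = p ∧ isCFWord a ∧ x = cfVal a}

/-!
Prepending a digit `a` to a continued fraction is the map `x ↦ 1 / (a + x)`, an inverse branch of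
the Gauss map, so `C_{p+1}` lies in the union of the images of `C_p` under all these branches,
where `C_0 = {0}`. The branch of digit `a` contracts by `a⁻²`; hence a bound `N(ε, A) ≤ K ε⁻ᵗ` on
covering numbers passes from `A ⊆ [0, ∞)` to this union as soon as `∑ a⁻²ᵗ` converges, that is, for
`t > 1 / 2`. By induction every `C_p` has upper Minkowski dimension at most `1 / 2`.

Conversely `C_1 = {1 / a : a ≥ 2}` is already large enough: near `x` its gaps have length about
`x²`, so its `δ`-neighbourhood contains an interval `(0, c √δ]`.
-/

open Metric Topology
open scoped NNReal ENNReal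

lemma toENNReal_finset_sum {ι : Type*} (s : Finset ι) (f : ι → ℕ∞) :
    ((∑ i ∈ s, f i : ℕ∞) : ℝ≥0∞) = ∑ i ∈ s, (f i : ℝ≥0∞) :=
  map_sum ENat.toENNRealRingHom f s

section CoveringNumber

variable {X Y : Type*} [PseudoEMetricSpace X] [PseudoEMetricSpace Y] {ε : ℝ≥0} {A B : Set X}

lemma coveringNumber_union_le :
    coveringNumber ε (A ∪ B) ≤ coveringNumber ε A + coveringNumber ε B := by
  by_cases hA : coveringNumber ε A = ⊤
  · simp [hA]
  by_cases hB : coveringNumber ε B = ⊤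
  · simp [hB]
  have hcover : IsCover ε (A ∪ B) (minimalCover ε A ∪ minimalCover ε B) := by
    rintro x (hx | hx)
    · exact (isCover_minimalCover hA).mono subset_union_left hx
    · exact (isCover_minimalCover hB).mono subset_union_right hx
  calc coveringNumber ε (A ∪ B)
      ≤ (minimalCover ε A ∪ minimalCover ε B).encard :=
        hcover.coveringNumber_le_encard (union_subset_union minimalCover_subset minimalCover_subset)
    _ ≤ (minimalCover ε A).encard + (minimalCover ε B).encard := encard_union_le _ _
    _ = coveringNumber ε A + coveringNumber ε B := by
        rw [encard_minimalCover hA, encard_minimalCover hB]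

lemma coveringNumber_biUnion_finset_le {ι : Type*} (s : Finset ι) (A : ι → Set X) :
    coveringNumber ε (⋃ i ∈ s, A i) ≤ ∑ i ∈ s, coveringNumber ε (A i) := by
  classical
  induction s using Finset.induction_on with
  | empty => simp
  | insert i s hi ih =>
    rw [Finset.set_biUnion_insert, Finset.sum_insert hi]
    exact coveringNumber_union_le.trans (by gcongr)

lemma coveringNumber_two_mul_le_of_subset (hAB : A ⊆ B) :
    coveringNumber (2 * ε) A ≤ coveringNumber ε B := by
  simpa using coveringNumber_subset_le (ε := 2 * ε) hAB

lemma coveringNumber_image_le {f : X → Y} {K : ℝ≥0} (hf : LipschitzOnWith K f A) :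
    coveringNumber (K * ε) (f '' A) ≤ coveringNumber ε A := by
  by_cases hA : coveringNumber ε A = ⊤
  · simp [hA]
  have hcover : IsCover (K * ε) (f '' A) (f '' minimalCover ε A) := by
    rintro _ ⟨x, hx, rfl⟩
    obtain ⟨y, hy, hxy : edist x y ≤ ε⟩ := isCover_minimalCover hA hx
    refine ⟨f y, mem_image_of_mem f hy, ?_⟩
    calc edist (f x) (f y) ≤ K * edist x y := hf hx (minimalCover_subset hy)
      _ ≤ ↑(K * ε) := by rw [ENNReal.coe_mul]; gcongr
  calc coveringNumber (K * ε) (f '' A)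
      ≤ (f '' minimalCover ε A).encard :=
        hcover.coveringNumber_le_encard (image_mono minimalCover_subset)
    _ ≤ (minimalCover ε A).encard := encard_image_le _ _
    _ = coveringNumber ε A := encard_minimalCover hA

lemma coveringNumber_Icc_zero_le (hε : ε ≠ 0) (r : ℝ≥0) :
    coveringNumber ε (Icc (0 : ℝ) r) ≤ (⌊r / ε⌋₊ + 1 : ℕ) := by
  let net : Finset ℝ := (Finset.range (⌊r / ε⌋₊ + 1)).image fun j : ℕ => (j * ε : ℝ)
  have hε' : (0 : ℝ) < ε := by positivity
  have hnet : (net : Set ℝ) ⊆ Icc 0 r := by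
    simp only [net, Finset.coe_image, Finset.coe_range, image_subset_iff]
    intro j hj
    have hj' : (j : ℝ≥0) ≤ r / ε := (Nat.le_floor_iff zero_le).1 (Nat.lt_succ_iff.1 hj)
    exact ⟨by positivity, mod_cast (le_div_iff₀ (by positivity)).1 hj'⟩
  have hcover : IsCover ε (Icc (0 : ℝ) r) net := by
    rintro x ⟨hx0, hxr⟩
    have hle : (⌊x / ε⌋₊ * ε : ℝ) ≤ x := (le_div_iff₀ hε').1 (Nat.floor_le (by positivity))
    have hlt : x < (⌊x / ε⌋₊ + 1) * ε := (div_lt_iff₀ hε').1 (Nat.lt_floor_add_one _)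
    have hmem : ⌊x / ε⌋₊ < ⌊r / ε⌋₊ + 1 := by
      refine Nat.lt_succ_iff.2 (Nat.le_floor ?_)
      rw [← NNReal.coe_le_coe]
      push_cast
      exact (Nat.floor_le (by positivity)).trans (by gcongr)
    refine ⟨⌊x / ε⌋₊ * ε, Finset.mem_image_of_mem _ (Finset.mem_range.2 hmem), ?_⟩
    change edist x _ ≤ _
    rw [edist_nndist, ENNReal.coe_le_coe, ← NNReal.coe_le_coe, coe_nndist, Real.dist_eq,
      abs_of_nonneg (by linarith)]
    linarith
  calc coveringNumber ε (Icc (0 : ℝ) r)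
      ≤ (net : Set ℝ).encard := hcover.coveringNumber_le_encard hnet
    _ = net.card := encard_coe_eq_coe_finsetCard net
    _ ≤ (⌊r / ε⌋₊ + 1 : ℕ) := mod_cast Finset.card_image_le.trans_eq (Finset.card_range _)

end CoveringNumber

/-- `A` has upper Minkowski (box-counting) dimension at most `t`, in the strong sense that its
covering numbers satisfy `N(ε, A) ≤ K ε⁻ᵗ`. The bound is required on all of `(0, 1]`, rather than
near `0`, so that it can be summed over infinitely many scales. -/
def HasCoveringExponent {X : Type*} [PseudoEMetricSpace X] (t : ℝ) (A : Set X) : Prop :=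
  ∃ K : ℝ≥0, ∀ ε : ℝ≥0, 0 < ε → ε ≤ 1 → (coveringNumber ε A : ℝ≥0∞) ≤ ↑(K * ε ^ (-t))

namespace HasCoveringExponent

variable {X : Type*} [PseudoEMetricSpace X] {t : ℝ} {A B : Set X}

lemma of_coveringNumber_two_mul_le {K : ℝ≥0}
    (hK : ∀ ε : ℝ≥0, 0 < ε → ε ≤ 1 → (coveringNumber (2 * ε) A : ℝ≥0∞) ≤ ↑(K * ε ^ (-t))) :
    HasCoveringExponent t A := by
  refine ⟨K * 2 ^ t, fun ε hε hε1 => ?_⟩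
  calc (coveringNumber ε A : ℝ≥0∞) = coveringNumber (2 * (ε / 2)) A := by
        rw [mul_div_cancel₀ ε two_ne_zero]
    _ ≤ ↑(K * (ε / 2) ^ (-t)) := hK _ (by positivity) ((half_le_self zero_le).trans hε1)
    _ = ↑(K * 2 ^ t * ε ^ (-t)) := by
        rw [NNReal.div_rpow, NNReal.rpow_neg 2, div_inv_eq_mul, mul_assoc, mul_comm (ε ^ (-t))]

lemma mono (hB : HasCoveringExponent t B) (hAB : A ⊆ B) : HasCoveringExponent t A := by
  obtain ⟨K, hK⟩ := hB
  refine of_coveringNumber_two_mul_le (K := K) fun ε hε hε1 => ?_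
  calc (coveringNumber (2 * ε) A : ℝ≥0∞) ≤ coveringNumber ε B :=
        mod_cast coveringNumber_two_mul_le_of_subset hAB
    _ ≤ ↑(K * ε ^ (-t)) := hK ε hε hε1

lemma singleton (ht : 0 ≤ t) (x : X) : HasCoveringExponent t {x} := by
  refine ⟨1, fun ε hε hε1 => ?_⟩
  rw [coveringNumber_singleton, one_mul, ENat.toENNReal_one, ENNReal.one_le_coe_iff]
  exact NNReal.one_le_rpow_of_pos_of_le_one_of_nonpos hε hε1 (neg_nonpos.2 ht)

lemma biUnion_finset {ι : Type*} (s : Finset ι) {A : ι → Set X}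
    (hA : ∀ i ∈ s, HasCoveringExponent t (A i)) : HasCoveringExponent t (⋃ i ∈ s, A i) := by
  choose! K hK using hA
  refine ⟨∑ i ∈ s, K i, fun ε hε hε1 => ?_⟩
  calc (coveringNumber ε (⋃ i ∈ s, A i) : ℝ≥0∞)
      ≤ ∑ i ∈ s, (coveringNumber ε (A i) : ℝ≥0∞) := by
        rw [← toENNReal_finset_sum]
        exact mod_cast coveringNumber_biUnion_finset_le s A
    _ ≤ ∑ i ∈ s, ↑(K i * ε ^ (-t)) := Finset.sum_le_sum fun i hi => hK i hi ε hε hε1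
    _ = ↑((∑ i ∈ s, K i) * ε ^ (-t)) := by rw [Finset.sum_mul, ENNReal.ofNNReal_finsetSum]

end HasCoveringExponent

section GaussMap

/-- The inverse branch `x ↦ 1 / (a + x)` of the Gauss map `x ↦ 1 / x - ⌊1 / x⌋`: it prepends the
digit `a` to a continued fraction. -/
noncomputable def gaussBranch (a : ℕ) (x : ℝ) : ℝ := 1 / (a + x)

/-- The union of the images of `A` under all inverse branches of the Gauss map, which for
`A ⊆ [0, 1)` is the preimage of `A` in `(0, 1]`. -/
def gaussPreimage (A : Set ℝ) : Set ℝ := ⋃ (a : ℕ) (_ : a ≠ 0), gaussBranch a '' A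

variable {A : Set ℝ}

lemma lipschitzOnWith_gaussBranch {a : ℕ} (ha : a ≠ 0) :
    LipschitzOnWith ((a : ℝ≥0) ^ 2)⁻¹ (gaussBranch a) (Ici 0) := by
  refine LipschitzOnWith.of_dist_le_mul fun x (hx : 0 ≤ x) y (hy : 0 ≤ y) => ?_
  have hdiff : gaussBranch a x - gaussBranch a y = (y - x) / ((a + x) * (a + y)) := by
    unfold gaussBranch
    field_simp
    ring
  rw [Real.dist_eq, Real.dist_eq, hdiff, abs_div, abs_sub_comm,
    abs_of_pos (by positivity : 0 < ((a : ℝ) + x) * (a + y)), div_eq_inv_mul]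
  push_cast
  gcongr
  nlinarith [mul_nonneg hx hy]

lemma gaussPreimage_subset (hA : A ⊆ Ici 0) {u : ℝ≥0} (hu : u ≠ 0) :
    gaussPreimage A ⊆
      (⋃ a ∈ Finset.Icc 1 ⌊u⌋₊, gaussBranch a '' A) ∪ Icc (0 : ℝ) (u⁻¹ : ℝ≥0) := by
  intro y hy
  simp only [gaussPreimage, mem_iUnion] at hy
  obtain ⟨a, ha, x, hx, rfl⟩ := hy
  have hx0 : 0 ≤ x := hA hx
  rcases le_or_gt a ⌊u⌋₊ with hau | hau
  · left
    exact mem_biUnion (Finset.mem_Icc.2 ⟨Nat.one_le_iff_ne_zero.2 ha, hau⟩) (mem_image_of_mem _ hx)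
  · right
    have hua : (u : ℝ) ≤ a := mod_cast (Nat.lt_of_floor_lt hau).le
    refine ⟨by unfold gaussBranch; positivity, ?_⟩
    rw [gaussBranch, one_div, NNReal.coe_inv]
    exact inv_anti₀ (by positivity) (by linarith)

lemma coveringNumber_gaussBranch_image_le (hA : A ⊆ Ici 0) {a : ℕ} (ha : a ≠ 0) (ε : ℝ≥0) :
    coveringNumber ε (gaussBranch a '' A) ≤ coveringNumber (a ^ 2 * ε) A := by
  have hscale : ((a : ℝ≥0) ^ 2)⁻¹ * (a ^ 2 * ε) = ε := inv_mul_cancel_left₀ (by positivity) ε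
  calc coveringNumber ε (gaussBranch a '' A)
      = coveringNumber (((a : ℝ≥0) ^ 2)⁻¹ * (a ^ 2 * ε)) (gaussBranch a '' A) := by rw [hscale]
    _ ≤ coveringNumber (a ^ 2 * ε) A :=
        coveringNumber_image_le ((lipschitzOnWith_gaussBranch ha).mono hA)

lemma coveringNumber_two_mul_gaussPreimage_le (hA : A ⊆ Ici 0) {u ε : ℝ≥0} (hu : u ≠ 0)
    (hε : ε ≠ 0) :
    coveringNumber (2 * ε) (gaussPreimage A) ≤
      ∑ a ∈ Finset.Icc 1 ⌊u⌋₊, coveringNumber (a ^ 2 * ε) A + (⌊u⁻¹ / ε⌋₊ + 1 : ℕ) :=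
  calc coveringNumber (2 * ε) (gaussPreimage A)
      ≤ coveringNumber ε
          ((⋃ a ∈ Finset.Icc 1 ⌊u⌋₊, gaussBranch a '' A) ∪ Icc (0 : ℝ) (u⁻¹ : ℝ≥0)) :=
        coveringNumber_two_mul_le_of_subset (gaussPreimage_subset hA hu)
    _ ≤ coveringNumber ε (⋃ a ∈ Finset.Icc 1 ⌊u⌋₊, gaussBranch a '' A) +
          coveringNumber ε (Icc (0 : ℝ) (u⁻¹ : ℝ≥0)) := coveringNumber_union_le
    _ ≤ ∑ a ∈ Finset.Icc 1 ⌊u⌋₊, coveringNumber ε (gaussBranch a '' A) +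
          (⌊u⁻¹ / ε⌋₊ + 1 : ℕ) :=
        add_le_add (coveringNumber_biUnion_finset_le _ _) (coveringNumber_Icc_zero_le hε _)
    _ ≤ ∑ a ∈ Finset.Icc 1 ⌊u⌋₊, coveringNumber (a ^ 2 * ε) A + (⌊u⁻¹ / ε⌋₊ + 1 : ℕ) := by
        refine add_le_add_left (Finset.sum_le_sum fun a ha => ?_) _
        exact coveringNumber_gaussBranch_image_le hA
          (Nat.one_le_iff_ne_zero.1 (Finset.mem_Icc.1 ha).1) ε

end GaussMap

lemma sum_coveringNumber_sq_mul_le {X : Type*} [PseudoEMetricSpace X] {A : Set X} {t : ℝ}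
    (ht : 1 / 2 < t) {K : ℝ≥0}
    (hK : ∀ ε : ℝ≥0, 0 < ε → ε ≤ 1 → (coveringNumber ε A : ℝ≥0∞) ≤ ↑(K * ε ^ (-t)))
    {u ε : ℝ≥0} (hε : 0 < ε) (huε : u ^ 2 * ε ≤ 1) :
    ∑ a ∈ Finset.Icc 1 ⌊u⌋₊, (coveringNumber (a ^ 2 * ε) A : ℝ≥0∞) ≤
      ↑(K * (∑' a : ℕ, (a : ℝ≥0) ^ (-(2 * t))) * ε ^ (-t)) := by
  have hsummable : Summable fun a : ℕ => (a : ℝ≥0) ^ (-(2 * t)) :=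
    NNReal.summable_rpow.2 (by linarith)
  have hterm : ∀ a ∈ Finset.Icc 1 ⌊u⌋₊,
      (coveringNumber (a ^ 2 * ε) A : ℝ≥0∞) ≤ ↑(K * ε ^ (-t) * (a : ℝ≥0) ^ (-(2 * t))) := by
    intro a ha
    obtain ⟨ha1, hau⟩ := Finset.mem_Icc.1 ha
    have hau' : (a : ℝ≥0) ≤ u := (Nat.le_floor_iff zero_le).1 hau
    have hscale : (a : ℝ≥0) ^ 2 * ε ≤ 1 := le_trans (by gcongr) huε
    have hpow : ((a : ℝ≥0) ^ 2) ^ (-t) = (a : ℝ≥0) ^ (-(2 * t)) := by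
      rw [← NNReal.rpow_natCast_mul]
      congr 1
      push_cast
      ring
    calc (coveringNumber (a ^ 2 * ε) A : ℝ≥0∞) ≤ ↑(K * (a ^ 2 * ε) ^ (-t)) :=
          hK _ (by positivity) hscale
      _ = ↑(K * ε ^ (-t) * (a : ℝ≥0) ^ (-(2 * t))) := by
          rw [NNReal.mul_rpow, hpow, mul_comm (_ ^ _) (ε ^ _), mul_assoc]
  calc ∑ a ∈ Finset.Icc 1 ⌊u⌋₊, (coveringNumber (a ^ 2 * ε) A : ℝ≥0∞)
      ≤ ∑ a ∈ Finset.Icc 1 ⌊u⌋₊, ↑(K * ε ^ (-t) * (a : ℝ≥0) ^ (-(2 * t))) :=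
        Finset.sum_le_sum hterm
    _ ≤ ↑(K * ε ^ (-t) * ∑' a : ℕ, (a : ℝ≥0) ^ (-(2 * t))) := by
        rw [← ENNReal.ofNNReal_finsetSum, ENNReal.coe_le_coe, ← Finset.mul_sum]
        gcongr
        exact hsummable.sum_le_tsum _ fun _ _ => zero_le
    _ = ↑(K * (∑' a : ℕ, (a : ℝ≥0) ^ (-(2 * t))) * ε ^ (-t)) := by rw [mul_right_comm]

-- At scale `ε`, the branches with digit `a ≤ ε^(-1/2)` are covered separately, the branch `a`
-- costing as much as `A` at scale `a² ε`; the remaining branches map into `[0, ε^(1/2)]`.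
lemma hasCoveringExponent_gaussPreimage {A : Set ℝ} {t : ℝ} (ht : 1 / 2 < t) (hA : A ⊆ Ici 0)
    (h : HasCoveringExponent t A) : HasCoveringExponent t (gaussPreimage A) := by
  obtain ⟨K, hK⟩ := h
  set Z := ∑' a : ℕ, (a : ℝ≥0) ^ (-(2 * t))
  refine .of_coveringNumber_two_mul_le (K := K * Z + 2) fun ε hε hε1 => ?_
  set u : ℝ≥0 := ε ^ (-(1 / 2) : ℝ) with hu
  have huε : u ^ 2 * ε = 1 := by
    rw [hu, ← NNReal.rpow_mul_natCast, ← NNReal.rpow_add_one hε.ne']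
    norm_num
  have hu0 : u ≠ 0 := (NNReal.rpow_pos hε).ne'
  have htail : u⁻¹ / ε = u := by
    rw [div_eq_iff hε.ne', inv_eq_iff_eq_inv]
    exact eq_inv_of_mul_eq_one_left (by rw [← huε]; ring)
  have hut : u ≤ ε ^ (-t) := NNReal.rpow_le_rpow_of_exponent_ge hε hε1 (by linarith)
  have h1t : 1 ≤ ε ^ (-t) :=
    NNReal.one_le_rpow_of_pos_of_le_one_of_nonpos hε hε1 (by linarith)
  have hfloor : ((⌊u⌋₊ + 1 : ℕ) : ℝ≥0) ≤ 2 * ε ^ (-t) := by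
    push_cast
    linarith [Nat.floor_le (zero_le (a := u))]
  calc (coveringNumber (2 * ε) (gaussPreimage A) : ℝ≥0∞)
      ≤ ∑ a ∈ Finset.Icc 1 ⌊u⌋₊, (coveringNumber (a ^ 2 * ε) A : ℝ≥0∞) + (⌊u⌋₊ + 1 : ℕ) := by
        have hcount := coveringNumber_two_mul_gaussPreimage_le hA hu0 hε.ne'
        rw [htail, ← ENat.toENNReal_le, ENat.toENNReal_add, toENNReal_finset_sum,
          ENat.toENNReal_coe] at hcount
        exact hcount
    _ ≤ ↑(K * Z * ε ^ (-t)) + ↑(2 * ε ^ (-t)) :=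
        add_le_add (sum_coveringNumber_sq_mul_le ht hK hε huε.le) (mod_cast hfloor)
    _ = ↑((K * Z + 2) * ε ^ (-t)) := by rw [← ENNReal.coe_add, add_mul]

lemma cfVal_nonneg (l : List ℕ) : 0 ≤ cfVal l := by
  induction l with
  | nil => exact le_rfl
  | cons a l ih => rw [cfVal]; positivity

lemma Cset_subset_Ici (p : ℕ) : Cset p ⊆ Ici 0 := by
  rintro _ ⟨l, -, -, rfl⟩
  exact cfVal_nonneg l

lemma Cset_zero : Cset 0 = {0} := by
  ext x
  simp [Cset, List.length_eq_zero_iff, isCFWord, cfVal]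

lemma one_div_mem_Cset_one {a : ℕ} (ha : 2 ≤ a) : 1 / (a : ℝ) ∈ Cset 1 :=
  ⟨[a], rfl, ⟨by simp only [List.mem_singleton, forall_eq]; omega, by simpa using ha⟩,
    by simp [cfVal]⟩

lemma Cset_succ_subset_gaussPreimage (p : ℕ) : Cset (p + 1) ⊆ gaussPreimage (Cset p) := by
  rintro _ ⟨l, hl, ⟨hpos, hlast⟩, rfl⟩
  obtain ⟨a, l, rfl⟩ := List.exists_cons_of_length_eq_add_one hl
  have ha : a ≠ 0 := Nat.one_le_iff_ne_zero.1 (hpos a List.mem_cons_self)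
  have hword : isCFWord l := by
    refine ⟨fun x hx => hpos x (List.mem_cons_of_mem a hx), ?_⟩
    cases l with
    | nil => simp
    | cons b l => rwa [List.getLast?_cons_cons] at hlast
  exact mem_biUnion ha ⟨cfVal l, ⟨l, by simpa using hl, hword, rfl⟩, rfl⟩

lemma hasCoveringExponent_Cset {t : ℝ} (ht : 1 / 2 < t) (p : ℕ) :
    HasCoveringExponent t (Cset p) := by
  induction p with
  | zero => exact Cset_zero ▸ .singleton (by linarith) 0
  | succ p ih =>
    exact (hasCoveringExponent_gaussPreimage ht (Cset_subset_Ici p) ih).mono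
      (Cset_succ_subset_gaussPreimage p)

section Volume

variable {A B : Set ℝ}

lemma closedNbhd_mono (hAB : A ⊆ B) (δ : ℝ) : closedNbhd A δ ⊆ closedNbhd B δ :=
  fun _ ⟨y, hy, hxy⟩ => ⟨y, hAB hy, hxy⟩

lemma volume_closedNbhd_le (A : Set ℝ) (δ : ℝ) {ε : ℝ≥0} (h : 0 < δ + ε) :
    volume (closedNbhd A δ) ≤ coveringNumber ε A * ENNReal.ofReal (2 * (δ + ε)) := by
  by_cases hA : coveringNumber ε A = ⊤
  · simp [hA, ENNReal.top_mul, h]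
  set T : Finset ℝ := (finite_minimalCover (ε := ε) (A := A)).toFinset
  have hT : (T.card : ℝ≥0∞) = coveringNumber ε A := by
    rw [← encard_minimalCover hA, finite_minimalCover.encard_eq_coe_toFinset_card,
      ENat.toENNReal_coe]
  have hcover : closedNbhd A δ ⊆ ⋃ y ∈ T, closedBall y (δ + ε) := by
    rintro x ⟨z, hz, hxz⟩
    obtain ⟨y, hy, hzy⟩ := mem_iUnion₂.1
      (isCover_iff_subset_iUnion_closedBall.1 (isCover_minimalCover hA) hz)
    exact mem_biUnion (finite_minimalCover.mem_toFinset.2 hy)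
      ((dist_triangle x z y).trans (add_le_add hxz hzy))
  calc volume (closedNbhd A δ) ≤ volume (⋃ y ∈ T, closedBall y (δ + ε)) := measure_mono hcover
    _ ≤ ∑ y ∈ T, volume (closedBall y (δ + ε)) := measure_biUnion_finset_le T _
    _ = coveringNumber ε A * ENNReal.ofReal (2 * (δ + ε)) := by
        simp only [Real.volume_closedBall, Finset.sum_const, nsmul_eq_mul, hT]

lemma HasCoveringExponent.exists_volume_closedNbhd_le {t : ℝ} (h : HasCoveringExponent t A) :
    ∃ K : ℝ≥0, ∀ δ : ℝ, 0 < δ → δ ≤ 1 →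
      volume (closedNbhd A δ) ≤ ENNReal.ofReal (K * δ ^ (1 - t)) := by
  obtain ⟨K, hK⟩ := h
  refine ⟨4 * K, fun δ hδ hδ1 => ?_⟩
  lift δ to ℝ≥0 using hδ.le
  rw [NNReal.coe_pos] at hδ
  calc volume (closedNbhd A δ)
      ≤ coveringNumber δ A * ENNReal.ofReal (2 * (δ + δ)) :=
        volume_closedNbhd_le A δ (by positivity)
    _ ≤ ENNReal.ofReal (K * δ ^ (-t)) * ENNReal.ofReal (2 * (δ + δ)) := by
        gcongr
        refine (hK δ hδ (mod_cast hδ1)).trans_eq ?_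
        rw [← ENNReal.ofReal_coe_nnreal]
        push_cast
        rfl
    _ = ENNReal.ofReal ((4 * K : ℝ≥0) * δ ^ (1 - t)) := by
        rw [NNReal.coe_mul, NNReal.coe_ofNat, ← ENNReal.ofReal_mul (by positivity), sub_eq_neg_add,
          Real.rpow_add_one (by positivity)]
        ring_nf

end Volume

section LogRatio

lemma tendsto_log_const_mul_rpow_div_log {c : ℝ} (hc : c ≠ 0) (s : ℝ) :
    Tendsto (fun δ : ℝ => Real.log (c * δ ^ s) / Real.log δ) (𝓝[>] 0) (𝓝 s) := by
  have hlim : Tendsto (fun δ : ℝ => Real.log c / Real.log δ + s) (𝓝[>] 0) (𝓝 s) := by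
    simpa using (Real.tendsto_log_nhdsGT_zero.const_div_atBot (Real.log c)).add_const s
  refine hlim.congr' ?_
  filter_upwards [Ioo_mem_nhdsGT one_pos] with δ ⟨hδ0, hδ1⟩
  have hlog : Real.log δ ≠ 0 := (Real.log_neg hδ0 hδ1).ne
  rw [Real.log_mul hc (by positivity), Real.log_rpow hδ0]
  field_simp

lemma log_div_log_le_of_le {δ x y : ℝ} (hδ0 : 0 < δ) (hδ1 : δ < 1) (hx : 0 < x) (hxy : x ≤ y) :
    Real.log y / Real.log δ ≤ Real.log x / Real.log δ :=
  div_le_div_of_nonpos_of_le (Real.log_neg hδ0 hδ1).le (Real.log_le_log hx hxy)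

lemma tendsto_log_div_log_of_rpow_bounds {f : ℝ → ℝ} {s c : ℝ} (hc : 0 < c)
    (hlower : ∀ᶠ δ in 𝓝[>] 0, c * δ ^ s ≤ f δ)
    (hupper : ∀ r < s, ∃ K : ℝ, ∀ᶠ δ in 𝓝[>] 0, f δ ≤ K * δ ^ r) :
    Tendsto (fun δ => Real.log (f δ) / Real.log δ) (𝓝[>] 0) (𝓝 s) := by
  have hsmall : ∀ᶠ δ : ℝ in 𝓝[>] 0, δ ∈ Ioo 0 1 := Ioo_mem_nhdsGT one_pos
  refine tendsto_order.2 ⟨fun b hb => ?_, fun b hb => ?_⟩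
  · obtain ⟨r, hbr, hrs⟩ := exists_between hb
    obtain ⟨K, hK⟩ := hupper r hrs
    have hK0 : K ≠ 0 := by
      rintro rfl
      obtain ⟨δ, hl, hu, hδ0, -⟩ := (hlower.and (hK.and hsmall)).exists
      have : 0 < c * δ ^ s := by positivity
      linarith
    filter_upwards [hlower, hK, hsmall,
      (tendsto_log_const_mul_rpow_div_log hK0 r).eventually_const_lt hbr] with δ hl hu ⟨hδ0, hδ1⟩ hb
    have hf : 0 < f δ := lt_of_lt_of_le (by positivity) hl
    exact hb.trans_le (log_div_log_le_of_le hδ0 hδ1 hf hu)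
  · filter_upwards [hlower, hsmall,
      (tendsto_log_const_mul_rpow_div_log hc.ne' s).eventually_lt_const hb] with δ hl ⟨hδ0, hδ1⟩ hb
    exact (log_div_log_le_of_le hδ0 hδ1 (by positivity) hl).trans_lt hb

end LogRatio

lemma tendsto_log_volume_closedNbhd_div_log {A : Set ℝ} {d c : ℝ} (hc : 0 < c)
    (hlower : ∀ᶠ δ in 𝓝[>] 0, ENNReal.ofReal (c * δ ^ (1 - d)) ≤ volume (closedNbhd A δ))
    (hupper : ∀ t > d, HasCoveringExponent t A) :
    Tendsto (fun δ => Real.log (volume (closedNbhd A δ)).toReal / Real.log δ)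
      (𝓝[>] 0) (𝓝 (1 - d)) := by
  have hbound : ∀ t > d, ∃ K : ℝ≥0, ∀ᶠ δ in 𝓝[>] 0,
      volume (closedNbhd A δ) ≤ ENNReal.ofReal (K * δ ^ (1 - t)) := fun t ht => by
    obtain ⟨K, hK⟩ := (hupper t ht).exists_volume_closedNbhd_le
    refine ⟨K, ?_⟩
    filter_upwards [Ioc_mem_nhdsGT one_pos] with δ ⟨hδ0, hδ1⟩ using hK δ hδ0 hδ1
  refine tendsto_log_div_log_of_rpow_bounds hc ?_ fun r hr => ?_
  · obtain ⟨K, hK⟩ := hbound (d + 1) (by linarith)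
    filter_upwards [hlower, hK] with δ hl hu
    exact (ENNReal.ofReal_le_iff_le_toReal (ne_top_of_le_ne_top ENNReal.ofReal_ne_top hu)).1 hl
  · obtain ⟨K, hK⟩ := hbound (1 - r) (by linarith)
    refine ⟨K, ?_⟩
    filter_upwards [hK, self_mem_nhdsWithin] with δ hu (hδ : 0 < δ)
    rw [sub_sub_cancel] at hu
    exact ENNReal.toReal_le_of_le_ofReal (by positivity) hu

lemma abs_sub_one_div_floor_le {x : ℝ} (hx0 : 0 < x) (hx1 : x ≤ 1) :
    |x - 1 / (⌊1 / x⌋₊ : ℝ)| ≤ 2 * x ^ 2 := by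
  set a := ⌊1 / x⌋₊
  have ha1 : (1 : ℝ) ≤ a := mod_cast Nat.le_floor (by simpa using (one_le_one_div hx0 hx1))
  have hax : a * x ≤ 1 := (le_div_iff₀ hx0).1 (Nat.floor_le (by positivity))
  have hxa : 1 < (a + 1) * x := (div_lt_iff₀ hx0).1 (Nat.lt_floor_add_one _)
  have hdiff : x - 1 / (a : ℝ) = -((1 - a * x) / a) := by field_simp; ring
  rw [hdiff, abs_neg, abs_of_nonneg (div_nonneg (by linarith) (by linarith)),
    div_le_iff₀ (by linarith)]
  have hhalf : 1 ≤ 2 * (a * x) := by nlinarith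
  calc 1 - a * x ≤ x * 1 := by linarith
    _ ≤ x * (2 * (a * x)) := by gcongr
    _ = 2 * x ^ 2 * a := by ring

lemma Ioc_subset_closedNbhd_Cset_one {δ : ℝ} (hδ : δ ≤ 1) :
    Ioc 0 (Real.sqrt δ / 2) ⊆ closedNbhd (Cset 1) δ := by
  rintro x ⟨hx0, hx⟩
  have hx2 : x ≤ 1 / 2 := by linarith [Real.sqrt_le_one.2 hδ]
  have hsq : (2 * x) ^ 2 ≤ δ := (Real.le_sqrt' (by positivity)).1 (by linarith)
  have hdigit : 2 ≤ ⌊1 / x⌋₊ := Nat.le_floor ((le_div_iff₀ hx0).2 (by push_cast; linarith))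
  refine ⟨_, one_div_mem_Cset_one hdigit, ?_⟩
  calc |x - 1 / (⌊1 / x⌋₊ : ℝ)| ≤ 2 * x ^ 2 := abs_sub_one_div_floor_le hx0 (by linarith)
    _ ≤ δ := by nlinarith

lemma ofReal_sqrt_le_volume_closedNbhd_Cset_one {δ : ℝ} (hδ : δ ≤ 1) :
    ENNReal.ofReal (1 / 2 * δ ^ (1 - 1 / 2 : ℝ)) ≤ volume (closedNbhd (Cset 1) δ) := by
  calc ENNReal.ofReal (1 / 2 * δ ^ (1 - 1 / 2 : ℝ)) = volume (Ioc 0 (Real.sqrt δ / 2)) := by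
        rw [Real.volume_Ioc, Real.sqrt_eq_rpow]; ring_nf
    _ ≤ volume (closedNbhd (Cset 1) δ) := measure_mono (Ioc_subset_closedNbhd_Cset_one hδ)

/-- The Minkowski dimension of `⋃_{p=1}^m C_p` is `1/2`:
`lim_{δ → 0⁺} log λ(V_δ(⋃_{p=1}^m C_p)) / log δ = 1/2`. -/
theorem minkowski_dim_union_Cp (m : ℕ) (hm : 0 < m) :
    Tendsto
      (fun δ : ℝ =>
        Real.log (volume (closedNbhd (⋃ (p : ℕ) (_ : 1 ≤ p) (_ : p ≤ m), Cset p) δ)).toReal /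
          Real.log δ)
      (nhdsWithin (0 : ℝ) (Set.Ioi 0)) (nhds (1 / 2 : ℝ)) := by
  have hunion : (⋃ (p : ℕ) (_ : 1 ≤ p) (_ : p ≤ m), Cset p) = ⋃ p ∈ Finset.Icc 1 m, Cset p := by
    simp only [Finset.mem_Icc, iUnion_and]
  have hone : Cset 1 ⊆ ⋃ p ∈ Finset.Icc 1 m, Cset p :=
    subset_biUnion_of_mem (u := Cset) (Finset.mem_Icc.2 ⟨le_rfl, hm⟩)
  rw [hunion, show (1 / 2 : ℝ) = 1 - 1 / 2 by norm_num]
  refine tendsto_log_volume_closedNbhd_div_log one_half_pos ?_ fun t ht =>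
    .biUnion_finset _ fun p _ => hasCoveringExponent_Cset ht p
  filter_upwards [Ioc_mem_nhdsGT one_pos] with δ ⟨_, hδ⟩
  exact (ofReal_sqrt_le_volume_closedNbhd_Cset_one hδ).trans
    (measure_mono (closedNbhd_mono hone δ))
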